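/- For every integer n ≥ 0 and every commutative ring element (or indeterminate) x, ∑_{k=0}^{n} t_{n,k} x^k = x(x+n)^{n-1}, where t_{n,k} is the number of forests on n labeled vertices consisting of exactly k rooted trees. -/

import Mathlib

/-- `rootedForestCount n k` is the number of rooted forests on the `n` labeled
vertices `Fin n` consisting of exactly `k` rooted trees: pairs of an acyclic
simple graph together with a set of roots containing exactly one vertex in each
connected component, where the number of connected components is `k`. -/
noncomputable def rootedForestCount (n k : ℕ) : ℕ :=
  Nat.card {p : SimpleGraph (Fin n) × Set (Fin n) //
    p.1.IsAcyclic ∧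
    (∀ c : p.1.ConnectedComponent, ∃! r, r ∈ p.2 ∧ p.1.connectedComponentMk r = c) ∧
    Nat.card p.1.ConnectedComponent = k}

/-!
Orient every edge of a rooted forest towards the root: rooted forests are the same thing as parent
functions without infinite ascending chains. More generally, let `c(s, n)` be the number of rooted
forests on `n` vertices whose roots are each attached to one of `s` external points. Removing a root
set of size `k` leaves a forest on `n - k` vertices attached to the `k` removed roots, so exactly
`s ^ k * c(k, n - k)` of these forests have that root set. By strong induction
`n * c(k, n - k) = k * n ^ (n - k)`, and summing over all root sets yields
`c(s, n) = s * (s + n) ^ (n - 1)` by the binomial theorem. For `s = 1`, the forests with `k` trees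
number `(n.choose k) * c(k, n - k) = ((n - 1).choose (k - 1)) * n ^ (n - k)`, and the binomial
theorem applies once more.
-/

open Relation

universe u

section RootedForests

variable {S V W : Type*}

lemma sum_choose_smul_mul_pow {R : Type*} [CommSemiring R] (n : ℕ) (a b : R) :
    ∑ k ∈ Finset.range (n + 2), (n + 1).choose k • (a ^ k * (k * b ^ (n + 1 - k))) =
      (n + 1) * (a * (a + b) ^ n) := by
  rw [Finset.sum_range_succ', add_pow, Finset.mul_sum, Finset.mul_sum]
  simp only [Nat.cast_zero, zero_mul, mul_zero, smul_zero, add_zero, Nat.add_sub_add_right]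
  refine Finset.sum_congr rfl fun k _ => ?_
  calc (n + 1).choose (k + 1) • (a ^ (k + 1) * (((k + 1 : ℕ) : R) * b ^ (n - k)))
    _ = ((n + 1).choose (k + 1) * (k + 1) : ℕ) * (a ^ (k + 1) * b ^ (n - k)) := by
      rw [nsmul_eq_mul, Nat.cast_mul]; ring
    _ = ((n + 1) * n.choose k : ℕ) * (a ^ (k + 1) * b ^ (n - k)) := by
      rw [Nat.add_one_mul_choose_eq]
    _ = (n + 1) * (a * (a ^ k * b ^ (n - k) * n.choose k)) := by push_cast; ring

lemma sum_set_ncard {M : Type*} [AddCommMonoid M] [Fintype W] (F : ℕ → M) :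
    ∑ U : Set W, F U.ncard =
      ∑ k ∈ Finset.range (Nat.card W + 1), (Nat.card W).choose k • F k := by
  rw [← Fintype.finsetEquivSet.sum_comp, ← Finset.powerset_univ]
  simpa using Finset.sum_powerset_apply_card F (x := (Finset.univ : Finset W))

lemma card_set_ncard_eq [Finite W] (k : ℕ) :
    Nat.card {U : Set W // U.ncard = k} = (Nat.card W).choose k := by
  have h := Set.ncard_powerset_ncard (Set.finite_univ (α := W)) k
  simp only [Set.subset_univ, true_and, Set.ncard_univ] at h
  exact (Nat.card_coe_set_eq _).trans h

lemma exists_adj_dist_lt {G : SimpleGraph V} {v r : V} (h : G.Reachable v r) (hne : v ≠ r) :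
    ∃ u, G.Adj v u ∧ G.dist u r < G.dist v r := by
  obtain ⟨walk, hwalk⟩ := h.exists_walk_length_eq_dist
  cases walk with
  | nil => exact absurd rfl hne
  | cons hadj tail =>
    refine ⟨_, hadj, ?_⟩
    rw [← hwalk, SimpleGraph.Walk.length_cons]
    exact Nat.lt_succ_of_le (SimpleGraph.dist_le tail)

/-- A rooted forest on `W` in which every root is attached to a point of `S`, encoded by its parent
function: `Sum.inl s` at a root attached to `s`, `Sum.inr p` at a vertex with parent `p`. With
`S = Unit` this is just a rooted forest. -/
@[ext]
structure ParentMap (S W : Type*) where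
  toFun : W → S ⊕ W
  wellFounded : WellFounded fun p w => toFun w = Sum.inr p

namespace ParentMap

/-- `f.IsParent p w` means that `p` is the parent of `w` in the forest `f`. -/
abbrev IsParent (f : ParentMap S W) (p w : W) : Prop :=
  f.toFun w = Sum.inr p

/-- The vertices without a parent. -/
def roots (f : ParentMap S W) : Set W :=
  {w | (f.toFun w).isLeft}

lemma mem_roots_iff {f : ParentMap S W} {w : W} : w ∈ f.roots ↔ ∃ s, f.toFun w = Sum.inl s :=
  Sum.isLeft_iff

lemma notMem_roots_iff {f : ParentMap S W} {w : W} : w ∉ f.roots ↔ ∃ p, f.IsParent p w :=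
  Sum.not_isLeft.trans Sum.isRight_iff

lemma IsParent.notMem_roots {f : ParentMap S W} {p w : W} (h : f.IsParent p w) : w ∉ f.roots :=
  notMem_roots_iff.2 ⟨p, h⟩

lemma IsParent.unique {f : ParentMap S W} {p q w : W} (hp : f.IsParent p w)
    (hq : f.IsParent q w) : p = q :=
  Sum.inr_injective (hp.symm.trans hq)

lemma roots_nonempty [Nonempty W] (f : ParentMap S W) : f.roots.Nonempty := by
  obtain ⟨r, -, hr⟩ := f.wellFounded.has_min Set.univ Set.univ_nonempty
  exact ⟨r, by_contra fun hr' => (notMem_roots_iff.1 hr').elim fun p hp => hr p trivial hp⟩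

instance [Finite S] [Finite W] : Finite (ParentMap S W) :=
  Finite.of_injective toFun fun _ _ => ParentMap.ext

section Graft

variable {U : Set W}

open scoped Classical in
/-- The parent function on `W` that attaches each `u ∈ U` to the point `h u` of `S`, and each root
of a forest `g` on `Uᶜ` to a point of `U` as prescribed by `g`. -/
noncomputable def graftFun (h : U → S) (g : ↥Uᶜ → U ⊕ ↥Uᶜ) (w : W) : S ⊕ W :=
  Sum.map h (Equiv.Set.sumCompl U ∘ g) ((Equiv.Set.sumCompl U).symm w)

lemma graftFun_mem (h : U → S) (g : ↥Uᶜ → U ⊕ ↥Uᶜ) (u : U) : graftFun h g u = .inl (h u) := by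
  simp [graftFun]

open scoped Classical in
lemma graftFun_compl (h : U → S) (g : ↥Uᶜ → U ⊕ ↥Uᶜ) (w : ↥Uᶜ) :
    graftFun h g w = .inr (Equiv.Set.sumCompl U (g w)) := by
  simp [graftFun]

/-- The forest obtained from a forest `g` on `Uᶜ`, whose roots are attached to `U`, by making the
points of `U` the new roots and attaching them to `S` via `h`. -/
noncomputable def graft (h : U → S) (g : ParentMap U ↥Uᶜ) : ParentMap S W where
  toFun := graftFun h g.toFun
  wellFounded := by
    classical
    refine Subrelation.wf (fun {p w} hp => ?_) (InvImage.wf (Equiv.Set.sumCompl U).symm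
      (Sum.lex_wf emptyWf.wf g.wellFounded))
    obtain ⟨w, rfl⟩ := (Equiv.Set.sumCompl U).surjective w
    rcases w with u | w
    · simp [graftFun_mem] at hp
    · obtain rfl : Equiv.Set.sumCompl U (g.toFun w) = p := by simpa [graftFun_compl] using hp
      rcases hw : g.toFun w with u | p <;> simp [InvImage, hw]

lemma roots_graft (h : U → S) (g : ParentMap U ↥Uᶜ) : (graft h g).roots = U := by
  ext w
  by_cases hw : w ∈ U
  · simpa only [hw, iff_true] using mem_roots_iff.2 ⟨_, graftFun_mem h g.toFun ⟨w, hw⟩⟩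
  · simpa only [hw, iff_false] using notMem_roots_iff.2 ⟨_, graftFun_compl h g.toFun ⟨w, hw⟩⟩

lemma graft_injective2 : Function.Injective2 (graft (S := S) (U := U)) := by
  classical
  intro h h' g g' heq
  have hfun (w : W) : graftFun h g.toFun w = graftFun h' g'.toFun w :=
    congrFun (congrArg toFun heq) w
  constructor
  · funext u
    simpa only [graftFun_mem, Sum.inl.injEq] using hfun u
  · ext1
    funext w
    simpa only [graftFun_compl, Sum.inr.injEq, EmbeddingLike.apply_eq_iff_eq] using hfun w

lemma exists_graft_eq (f : ParentMap S W) :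
    ∃ (h : f.roots → S) (g : ParentMap f.roots ↥f.rootsᶜ), graft h g = f := by
  classical
  choose h hh using fun u : f.roots => mem_roots_iff.1 u.2
  choose parent hparent using fun w : ↥f.rootsᶜ => notMem_roots_iff.1 w.2
  let e := Equiv.Set.sumCompl f.roots
  have wf : WellFounded fun p w => e.symm (parent w) = .inr p := by
    refine Subrelation.wf (fun {p w} hp => ?_) (InvImage.wf Subtype.val f.wellFounded)
    have hpw : parent w = p := by simpa [e] using (Equiv.symm_apply_eq e).1 hp
    exact (hparent w).trans (congrArg Sum.inr hpw)
  refine ⟨h, ⟨fun w => e.symm (parent w), wf⟩, ?_⟩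
  ext1
  funext w
  by_cases hw : w ∈ f.roots
  · exact (graftFun_mem _ _ ⟨w, hw⟩).trans (hh ⟨w, hw⟩).symm
  · refine (graftFun_compl _ _ ⟨w, hw⟩).trans ?_
    simp only [e, Equiv.apply_symm_apply]
    exact (hparent ⟨w, hw⟩).symm

end Graft

section Counting

lemma card_roots_eq [Finite W] (U : Set W) :
    Nat.card {f : ParentMap S W // f.roots = U} =
      Nat.card S ^ U.ncard * Nat.card (ParentMap U ↥Uᶜ) := by
  rw [← Nat.card_coe_set_eq, ← Nat.card_fun, ← Nat.card_prod]
  refine (Nat.card_eq_of_bijective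
    (fun x : (U → S) × ParentMap U ↥Uᶜ => ⟨graft x.1 x.2, roots_graft x.1 x.2⟩) ⟨?_, ?_⟩).symm
  · intro x y hxy
    exact Prod.ext_iff.2 (graft_injective2 (congrArg Subtype.val hxy))
  · rintro ⟨f, rfl⟩
    obtain ⟨h, g, hf⟩ := f.exists_graft_eq
    exact ⟨(h, g), Subtype.ext hf⟩

lemma card_mul_card_roots_eq [Finite W] (U : Set W) :
    Nat.card W * Nat.card {f : ParentMap S W // f.roots = U} = Nat.card S ^ U.ncard *
      ((Nat.card U + Nat.card ↥Uᶜ) * Nat.card (ParentMap U ↥Uᶜ)) := by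
  rw [card_roots_eq, Nat.card_coe_set_eq, Nat.card_coe_set_eq, Set.ncard_add_ncard_compl]
  ring

lemma card_eq_one [IsEmpty W] : Nat.card (ParentMap S W) = 1 := by
  have : Subsingleton (ParentMap S W) := ⟨fun f g => ParentMap.ext (Subsingleton.elim _ _)⟩
  have : Nonempty (ParentMap S W) := ⟨isEmptyElim, ⟨isEmptyElim⟩⟩
  exact Nat.card_unique

lemma card_eq_sum_card_roots_eq [Finite S] [Fintype W] :
    Nat.card (ParentMap S W) = ∑ U : Set W, Nat.card {f : ParentMap S W // f.roots = U} := by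
  rw [← Nat.card_sigma, Nat.card_congr (Equiv.sigmaFiberEquiv roots)]

/-- The count is `s * (s + n) ^ (n - 1)` for `s = |S|` and `n = |W|`; unlike that formula, this form
survives the truncated subtraction at `n = 0`. -/
theorem add_card_mul_card (S W : Type u) [Finite S] [Finite W] :
    (Nat.card S + Nat.card W) * Nat.card (ParentMap S W) =
      Nat.card S * (Nat.card S + Nat.card W) ^ Nat.card W := by
  induction hn : Nat.card W using Nat.strong_induction_on generalizing S W with
  | _ n ih =>
    cases nonempty_fintype W
    rcases n with _ | m
    · have := Finite.card_eq_zero_iff.1 hn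
      rw [card_eq_one, pow_zero, add_zero]
    have : Nonempty W := Finite.card_pos_iff.1 (by omega)
    have card_fiber (U : Set W) : (m + 1) * Nat.card {f : ParentMap S W // f.roots = U} =
        Nat.card S ^ U.ncard * (U.ncard * (m + 1) ^ (m + 1 - U.ncard)) := by
      rcases U.eq_empty_or_nonempty with rfl | hU
      · have : IsEmpty {f : ParentMap S W // f.roots = ∅} :=
          ⟨fun f => f.1.roots_nonempty.ne_empty f.2⟩
        simp
      · have hlt : Nat.card ↥Uᶜ < m + 1 := by
          have := U.ncard_pos.2 hU
          rw [Nat.card_coe_set_eq, Set.ncard_compl]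
          omega
        rw [← hn, card_mul_card_roots_eq, ih _ hlt _ _ rfl, Nat.card_coe_set_eq,
          Nat.card_coe_set_eq, Set.ncard_add_ncard_compl, Set.ncard_compl]
    have hmul : (m + 1) * Nat.card (ParentMap S W) =
        (m + 1) * (Nat.card S * (Nat.card S + (m + 1)) ^ m) := by
      rw [card_eq_sum_card_roots_eq, Finset.mul_sum, Finset.sum_congr rfl fun U _ => card_fiber U,
        sum_set_ncard fun k => Nat.card S ^ k * (k * (m + 1) ^ (m + 1 - k)), hn]
      simpa only [Nat.cast_id] using sum_choose_smul_mul_pow m (Nat.card S) (m + 1)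
    rw [Nat.eq_of_mul_eq_mul_left m.succ_pos hmul, pow_succ]
    ring

lemma card_roots_ncard_eq_zero [Nonempty W] [Finite W] :
    Nat.card {f : ParentMap S W // f.roots.ncard = 0} = 0 := by
  have : IsEmpty {f : ParentMap S W // f.roots.ncard = 0} :=
    ⟨fun f => f.1.roots_nonempty.ne_empty ((Set.ncard_eq_zero).1 f.2)⟩
  exact Nat.card_of_isEmpty

theorem card_roots_ncard_eq_succ {S W : Type u} [Finite S] [Finite W] {n : ℕ}
    (hW : Nat.card W = n + 1) (k : ℕ) :
    Nat.card {f : ParentMap S W // f.roots.ncard = k + 1} =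
      n.choose k * (Nat.card S ^ (k + 1) * (n + 1) ^ (n - k)) := by
  cases nonempty_fintype W
  have card_fiber (U : {U : Set W // U.ncard = k + 1}) :
      (n + 1) * Nat.card {f : ParentMap S W // f.roots = U} =
        (k + 1) * (Nat.card S ^ (k + 1) * (n + 1) ^ (n - k)) := by
    rw [← hW, card_mul_card_roots_eq, add_card_mul_card, Nat.card_coe_set_eq, Nat.card_coe_set_eq,
      Set.ncard_add_ncard_compl, Set.ncard_compl, U.2, hW, Nat.add_sub_add_right]
    ring
  have hmul : (n + 1) * Nat.card {f : ParentMap S W // f.roots.ncard = k + 1} =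
      (n + 1) * (n.choose k * (Nat.card S ^ (k + 1) * (n + 1) ^ (n - k))) := by
    have : Fintype {U : Set W // U.ncard = k + 1} := Fintype.ofFinite _
    rw [← Nat.card_congr (Equiv.sigmaSubtypeFiberEquivSubtype
        (q := fun U : Set W => U.ncard = k + 1) roots fun _ => Iff.rfl),
      Nat.card_sigma, Finset.mul_sum, Finset.sum_congr rfl fun U _ => card_fiber U,
      Finset.sum_const, Finset.card_univ, ← Nat.card_eq_fintype_card, card_set_ncard_eq, hW,
      smul_eq_mul, ← mul_assoc, ← Nat.add_one_mul_choose_eq, mul_assoc]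
  exact Nat.eq_of_mul_eq_mul_left n.succ_pos hmul

end Counting

section Graph

/-- The undirected graph underlying a forest: each vertex is joined to its parent. -/
def graph (f : ParentMap S V) : SimpleGraph V :=
  SimpleGraph.fromRel f.IsParent

variable {f : ParentMap S V}

lemma graph_adj {u v : V} : f.graph.Adj u v ↔ f.IsParent u v ∨ f.IsParent v u := by
  refine ⟨And.right, fun h => ⟨?_, h⟩⟩
  rintro rfl
  exact f.wellFounded.irrefl.irrefl u (or_self_iff.1 h)

lemma exists_mem_roots_reachable (f : ParentMap S V) (v : V) :
    ∃ r ∈ f.roots, f.graph.Reachable v r := by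
  induction v using f.wellFounded.induction with
  | _ v ih =>
    by_cases hv : v ∈ f.roots
    · exact ⟨v, hv, .rfl⟩
    · obtain ⟨p, hp⟩ := notMem_roots_iff.1 hv
      obtain ⟨r, hr, hpr⟩ := ih p hp
      exact ⟨r, hr, (graph_adj.2 (.inr hp)).reachable.trans hpr⟩

/-- A walk that leaves `v` without using the edge to the parent of `v` can only move up along an
edge it has previously come down, so it never leaves the subtree of `v`. -/
lemma reflTransGen_isParent_of_reachable {H : SimpleGraph V} (hle : H ≤ f.graph) {v w : V}
    (hv : ∀ p, f.IsParent p v → ¬H.Adj v p) (hvw : H.Reachable v w) :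
    ReflTransGen f.IsParent v w := by
  rw [SimpleGraph.reachable_iff_reflTransGen] at hvw
  induction hvw with
  | refl => exact .refl
  | @tail a b _ hab ih =>
    rcases graph_adj.1 (hle hab) with hparent | hparent
    · exact ih.tail hparent
    · rcases ih.cases_tail with rfl | ⟨c, hvc, hca⟩
      · exact absurd hab (hv b hparent)
      · exact hparent.unique hca ▸ hvc

lemma isAcyclic_graph (f : ParentMap S V) : f.graph.IsAcyclic := by
  have isBridge {p v : V} (hp : f.IsParent p v) : f.graph.IsBridge s(v, p) := by
    rw [SimpleGraph.isBridge_iff]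
    intro hreach
    have hdesc : ReflTransGen f.IsParent v p := by
      refine reflTransGen_isParent_of_reachable (f.graph.deleteEdges_le _) (fun q hq hadj => ?_)
        hreach
      simp [hq.unique hp] at hadj
    exact f.wellFounded.transGen.irrefl.irrefl v (.tail' hdesc hp)
  rw [SimpleGraph.isAcyclic_iff_forall_adj_isBridge]
  intro u v huv
  rcases graph_adj.1 huv with h | h
  · exact Sym2.eq_swap ▸ isBridge h
  · exact isBridge h

lemma eq_of_mem_roots_of_reachable {r v : V} (hr : r ∈ f.roots) (hv : v ∈ f.roots)
    (h : f.graph.Reachable r v) : r = v := by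
  have hdesc : ReflTransGen f.IsParent r v :=
    reflTransGen_isParent_of_reachable le_rfl (fun _ hp _ => hp.notMem_roots hr) h
  rcases hdesc.cases_tail with rfl | ⟨p, -, hp⟩
  · rfl
  · exact absurd hv hp.notMem_roots

lemma eq_of_graph_eq_of_roots_eq [Subsingleton S] {f g : ParentMap S V}
    (hgraph : f.graph = g.graph) (hroots : f.roots = g.roots) : f = g := by
  ext1
  funext v
  induction v using f.wellFounded.induction with
  | _ v ih =>
    by_cases hv : v ∈ f.roots
    · obtain ⟨s, hf⟩ := mem_roots_iff.1 hv
      obtain ⟨t, hg⟩ := mem_roots_iff.1 (hroots ▸ hv)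
      rw [hf, hg, Subsingleton.elim s t]
    · obtain ⟨p, hp⟩ := notMem_roots_iff.1 hv
      have hadj : g.graph.Adj v p := hgraph ▸ graph_adj.2 (.inr hp)
      rcases graph_adj.1 hadj with hvp | hpv
      · exact absurd ((ih p hp).trans hvp) (f.wellFounded.asymmetric _ _ hp)
      · exact hp.trans hpv.symm

end Graph

end ParentMap

/-- `G` is a forest in which `R` marks one root in each tree. -/
structure IsRootedForest (G : SimpleGraph V) (R : Set V) : Prop where
  isAcyclic : G.IsAcyclic
  existsUnique_root : ∀ c : G.ConnectedComponent, ∃! r, r ∈ R ∧ G.connectedComponentMk r = c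

lemma ParentMap.isRootedForest (f : ParentMap S V) : IsRootedForest f.graph f.roots where
  isAcyclic := f.isAcyclic_graph
  existsUnique_root c := by
    induction c using SimpleGraph.ConnectedComponent.ind with
    | _ v =>
      obtain ⟨r, hr, hvr⟩ := f.exists_mem_roots_reachable v
      refine ⟨r, ⟨hr, SimpleGraph.ConnectedComponent.sound hvr.symm⟩, fun r' ⟨hr', hr'v⟩ => ?_⟩
      exact eq_of_mem_roots_of_reachable hr' hr
        ((SimpleGraph.ConnectedComponent.exact hr'v).trans hvr)

namespace IsRootedForest

variable {G : SimpleGraph V} {R : Set V}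

lemma eq_of_mem_of_reachable (h : IsRootedForest G R) {r s : V} (hr : r ∈ R) (hs : s ∈ R)
    (hrs : G.Reachable r s) : r = s :=
  (h.existsUnique_root _).unique ⟨hr, SimpleGraph.ConnectedComponent.sound hrs⟩ ⟨hs, rfl⟩

lemma exists_mem_reachable (h : IsRootedForest G R) (v : V) : ∃ r ∈ R, G.Reachable v r :=
  let ⟨r, hr, hrv⟩ := (h.existsUnique_root (G.connectedComponentMk v)).exists
  ⟨r, hr, (SimpleGraph.ConnectedComponent.exact hrv).symm⟩

lemma card_connectedComponent (h : IsRootedForest G R) :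
    Nat.card G.ConnectedComponent = R.ncard := by
  rw [← Nat.card_coe_set_eq]
  refine (Nat.card_eq_of_bijective (fun r : R => G.connectedComponentMk r) ⟨?_, fun c => ?_⟩).symm
  · intro r s hrs
    exact Subtype.ext (h.eq_of_mem_of_reachable r.2 s.2 (SimpleGraph.ConnectedComponent.exact hrs))
  · obtain ⟨r, ⟨hr, hrc⟩, -⟩ := h.existsUnique_root c
    exact ⟨⟨r, hr⟩, hrc⟩

/-- The depth of a vertex is its distance to the root of its tree. -/
lemma exists_depth (h : IsRootedForest G R) :
    ∃ depth : V → ℕ, ∀ v ∉ R, ∃ p, G.Adj v p ∧ depth p < depth v := by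
  choose root hroot hreach using h.exists_mem_reachable
  refine ⟨fun v => G.dist v (root v), fun v hv => ?_⟩
  have hne : v ≠ root v := fun heq => hv (heq ▸ hroot v)
  obtain ⟨p, hadj, hlt⟩ := exists_adj_dist_lt (hreach v) hne
  have hroot_eq : root p = root v := h.eq_of_mem_of_reachable (hroot p) (hroot v)
    ((hreach p).symm.trans (hadj.symm.reachable.trans (hreach v)))
  exact ⟨p, hadj, by simpa only [hroot_eq] using hlt⟩

lemma exists_parentMap_le (h : IsRootedForest G R) :
    ∃ f : ParentMap Unit V, f.graph ≤ G ∧ f.roots = R := by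
  classical
  obtain ⟨depth, hdepth⟩ := h.exists_depth
  choose parent hadj hlt using hdepth
  let toFun (v : V) : Unit ⊕ V := if hv : v ∈ R then .inl () else .inr (parent v hv)
  have adj_and_lt {p v : V} (hp : toFun v = .inr p) : G.Adj v p ∧ depth p < depth v := by
    by_cases hv : v ∈ R
    · simp [toFun, hv] at hp
    · obtain rfl : parent v hv = p := by simpa [toFun, hv] using hp
      exact ⟨hadj v hv, hlt v hv⟩
  let f : ParentMap Unit V :=
    ⟨toFun, Subrelation.wf (fun hp => (adj_and_lt hp).2) (measure depth).wf⟩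
  refine ⟨f, fun u v huv => ?_, ?_⟩
  · rcases ParentMap.graph_adj.1 huv with hp | hp
    · exact (adj_and_lt hp).1.symm
    · exact (adj_and_lt hp).1
  · ext v
    by_cases hv : v ∈ R <;> simp [ParentMap.roots, f, toFun, hv]

lemma exists_parentMap (h : IsRootedForest G R) :
    ∃ f : ParentMap Unit V, f.graph = G ∧ f.roots = R := by
  obtain ⟨f, hle, rfl⟩ := h.exists_parentMap_le
  have hreach : f.graph.Reachable = G.Reachable := by
    ext u v
    refine ⟨.mono hle, fun huv => ?_⟩
    obtain ⟨r, hr, hur⟩ := f.exists_mem_roots_reachable u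
    obtain ⟨s, hs, hvs⟩ := f.exists_mem_roots_reachable v
    obtain rfl : r = s :=
      h.eq_of_mem_of_reachable hr hs ((hur.mono hle).symm.trans (huv.trans (hvs.mono hle)))
    exact hur.trans hvs.symm
  have hmaximal := (SimpleGraph.maximal_isAcyclic_iff_reachable_eq hle f.isAcyclic_graph).2 hreach
  exact ⟨f, hmaximal.eq_of_le ⟨le_rfl, h.isAcyclic⟩ hle, rfl⟩

end IsRootedForest

lemma rootedForestCount_eq_card_parentMap (n k : ℕ) :
    rootedForestCount n k = Nat.card {f : ParentMap Unit (Fin n) // f.roots.ncard = k} := by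
  refine (Nat.card_eq_of_bijective (fun f => ⟨(f.1.graph, f.1.roots), f.1.isRootedForest.1,
    f.1.isRootedForest.2, f.1.isRootedForest.card_connectedComponent.trans f.2⟩) ⟨?_, ?_⟩).symm
  · intro f g hfg
    obtain ⟨hgraph, hroots⟩ := Prod.ext_iff.1 (congrArg Subtype.val hfg)
    exact Subtype.ext (ParentMap.eq_of_graph_eq_of_roots_eq hgraph hroots)
  · rintro ⟨⟨G, R⟩, hacyclic, hroot, hcard⟩
    have hforest : IsRootedForest G R := ⟨hacyclic, hroot⟩
    obtain ⟨f, rfl, rfl⟩ := hforest.exists_parentMap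
    exact ⟨⟨f, hforest.card_connectedComponent.symm.trans hcard⟩, rfl⟩

lemma rootedForestCount_succ_zero (n : ℕ) : rootedForestCount (n + 1) 0 = 0 := by
  rw [rootedForestCount_eq_card_parentMap, ParentMap.card_roots_ncard_eq_zero]

theorem rootedForestCount_succ_succ (n k : ℕ) :
    rootedForestCount (n + 1) (k + 1) = n.choose k * (n + 1) ^ (n - k) := by
  rw [rootedForestCount_eq_card_parentMap, ParentMap.card_roots_ncard_eq_succ (Nat.card_fin _)]
  simp

end RootedForests

theorem stmt_3_general (R : Type*) [Semiring R] (n : ℕ) (hn : 1 ≤ n) (x : R) :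
    ∑ k ∈ Finset.range (n + 1), (rootedForestCount n k : R) * x ^ k
      = x * (x + (n : R)) ^ (n - 1) := by
  obtain ⟨m, rfl⟩ := Nat.exists_eq_add_of_le' hn
  rw [Finset.sum_range_succ', rootedForestCount_succ_zero, Nat.cast_zero, zero_mul, add_zero,
    Nat.add_sub_cancel, (Nat.commute_cast x (m + 1)).add_pow, Finset.mul_sum]
  refine Finset.sum_congr rfl fun k _ => ?_
  rw [rootedForestCount_succ_succ, Nat.cast_comm, mul_comm (m.choose k), Nat.cast_mul, Nat.cast_pow,
    pow_succ', mul_assoc, mul_assoc]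

theorem stmt_3 (R : Type*) [CommRing R] (n : ℕ) (hn : 1 ≤ n) (x : R) :
    ∑ k ∈ Finset.range (n + 1), (rootedForestCount n k : R) * x ^ k
      = x * (x + (n : R)) ^ (n - 1) :=
  stmt_3_general R n hn x
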